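/- For any prime power q ≥ 5, the imaginary chords of the twisted cubic C form a single orbit of lines under G_q, and the stabilizer in G_q of any imaginary chord has order 2(q+1). -/

import Mathlib

open Matrix Submodule

noncomputable section

/-- Row-vector action of an invertible matrix on subspaces of `F^4`:
a projectivity of `PG(3,q)` induced by the matrix. -/
def projAct (F : Type) [Field F] (A : GL (Fin 4) F) :
    Submodule F (Fin 4 → F) → Submodule F (Fin 4 → F) :=
  fun W => W.map (Matrix.vecMulLinear (A : Matrix (Fin 4) (Fin 4) F))

/-- Representative vectors of the points of the twisted cubic. -/
def cubicVecs (F : Type) [Field F] : Set (Fin 4 → F) :=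
  {v | (∃ t : F, v = ![t ^ 3, t ^ 2, t, 1]) ∨ v = ![1, 0, 0, 0]}

/-- The twisted cubic, as a set of projective points (1-dimensional subspaces). -/
def twistedCubic (F : Type) [Field F] : Set (Submodule F (Fin 4 → F)) :=
  (fun v => Submodule.span F {v}) '' cubicVecs F

/-- The group `G_q` of projectivities fixing the twisted cubic, modeled as those maps
on subspaces that are induced by an invertible matrix and map the cubic onto itself. -/
def Gq (F : Type) [Field F] :
    Set ((Submodule F (Fin 4 → F)) → (Submodule F (Fin 4 → F))) :=
  {f | (∃ A : GL (Fin 4) F, f = projAct F A) ∧ f '' twistedCubic F = twistedCubic F}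

def isPoint (F : Type) [Field F] (W : Submodule F (Fin 4 → F)) : Prop :=
  Module.finrank F W = 1

def isLine (F : Type) [Field F] (W : Submodule F (Fin 4 → F)) : Prop :=
  Module.finrank F W = 2

/-- The orbit of a line under `G_q`. -/
def lineOrbit (F : Type) [Field F] (ℓ : Submodule F (Fin 4 → F)) :
    Set (Submodule F (Fin 4 → F)) :=
  {m | ∃ f ∈ Gq F, f ℓ = m}

/-- The stabilizer of a line in `G_q`. -/
def lineStab (F : Type) [Field F] (ℓ : Submodule F (Fin 4 → F)) :
    Set ((Submodule F (Fin 4 → F)) → (Submodule F (Fin 4 → F))) :=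
  {f ∈ Gq F | f ℓ = ℓ}

/-- The linear form `y ↦ c0 y0 + c1 y1 + c2 y2 + c3 y3` defining a plane. -/
def planeForm (F : Type) [Field F] (c : Fin 4 → F) : (Fin 4 → F) →ₗ[F] F where
  toFun y := c 0 * y 0 + c 1 * y 1 + c 2 * y 2 + c 3 * y 3
  map_add' a b := by simp only [Pi.add_apply]; ring
  map_smul' r a := by simp only [Pi.smul_apply, smul_eq_mul, RingHom.id_apply]; ring

/-- The plane `π(c0,c1,c2,c3)`. -/
def planeOf (F : Type) [Field F] (c : Fin 4 → F) : Submodule F (Fin 4 → F) :=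
  LinearMap.ker (planeForm F c)

/-- The null polarity `𝔄`: the polar subspace of `W` w.r.t. the bilinear form
sending a point `(x0:x1:x2:x3)` to the plane `π(x3, −3x2, 3x1, −x0)`. -/
def nullPolarity (F : Type) [Field F] (W : Submodule F (Fin 4 → F)) :
    Submodule F (Fin 4 → F) :=
  ⨅ x ∈ (W : Set (Fin 4 → F)), planeOf F ![x 3, -(3 * x 2), 3 * x 1, -(x 0)]

/-- The tangent line to the twisted cubic at `P(t)`, `t ∈ F`. -/
def tangentAt (F : Type) [Field F] (t : F) : Submodule F (Fin 4 → F) :=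
  Submodule.span F {![t ^ 3, t ^ 2, t, 1], ![3 * t ^ 2, 2 * t, 1, 0]}

/-- The tangent line to the twisted cubic at `P(∞)`. -/
def tangentAtInf (F : Type) [Field F] : Submodule F (Fin 4 → F) :=
  Submodule.span F {![1, 0, 0, 0], ![0, 1, 0, 0]}

def isTangent (F : Type) [Field F] (ℓ : Submodule F (Fin 4 → F)) : Prop :=
  (∃ t : F, ℓ = tangentAt F t) ∨ ℓ = tangentAtInf F

/-- The osculating plane at `P(t)`, `t ∈ F`. -/
def oscPlane (F : Type) [Field F] (t : F) : Submodule F (Fin 4 → F) :=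
  planeOf F ![1, -(3 * t), 3 * t ^ 2, -(t ^ 3)]

/-- The osculating plane at `P(∞)`. -/
def oscPlaneInf (F : Type) [Field F] : Submodule F (Fin 4 → F) :=
  planeOf F ![0, 0, 0, 1]

def isOscPlane (F : Type) [Field F] (π : Submodule F (Fin 4 → F)) : Prop :=
  (∃ t : F, π = oscPlane F t) ∨ π = oscPlaneInf F

/-- A real chord: the line joining two distinct points of the twisted cubic. -/
def isRealChord (F : Type) [Field F] (ℓ : Submodule F (Fin 4 → F)) : Prop :=
  ∃ u ∈ cubicVecs F, ∃ v ∈ cubicVecs F,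
    Submodule.span F {u} ≠ Submodule.span F {v} ∧ ℓ = Submodule.span F {u, v}

/-- A real axis: the intersection of two distinct osculating planes. -/
def isRealAxis (F : Type) [Field F] (ℓ : Submodule F (Fin 4 → F)) : Prop :=
  ∃ π₁ π₂ : Submodule F (Fin 4 → F),
    isOscPlane F π₁ ∧ isOscPlane F π₂ ∧ π₁ ≠ π₂ ∧ ℓ = π₁ ⊓ π₂

/-- The `F_{q²}`-extension of a subspace of `F^4`. -/
def extendSub (F K : Type) [Field F] [Field K] [Algebra F K]
    (W : Submodule F (Fin 4 → F)) : Submodule K (Fin 4 → K) :=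
  Submodule.span K ((fun v i => algebraMap F K (v i)) '' (W : Set (Fin 4 → F)))

/-- An external line: a line containing no point of the twisted cubic. -/
def isExternal (F : Type) [Field F] (ℓ : Submodule F (Fin 4 → F)) : Prop :=
  isLine F ℓ ∧ ∀ P ∈ twistedCubic F, ¬ P ≤ ℓ

/-- An imaginary chord: a line disjoint from the cubic whose `F_{q²}`-extension joins a
pair of Frobenius-conjugate points `P(t)`, `P(t^q)` of the cubic over `F_{q²}`. -/
def isImagChord (F K : Type) [Field F] [Field K] [Algebra F K] (q : ℕ)
    (ℓ : Submodule F (Fin 4 → F)) : Prop :=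
  isExternal F ℓ ∧
  ∃ t : K, t ∉ Set.range (algebraMap F K) ∧
    extendSub F K ℓ =
      Submodule.span K
        ({![t ^ 3, t ^ 2, t, 1], ![(t ^ q) ^ 3, (t ^ q) ^ 2, t ^ q, 1]} :
          Set (Fin 4 → K))

/-- An imaginary axis: a line whose `F_{q²}`-extension is the intersection of a pair of
Frobenius-conjugate osculating planes `π_osc(t)`, `π_osc(t^q)` over `F_{q²}`. -/
def isImagAxis (F K : Type) [Field F] [Field K] [Algebra F K] (q : ℕ)
    (ℓ : Submodule F (Fin 4 → F)) : Prop :=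
  isLine F ℓ ∧
  ∃ t : K, t ∉ Set.range (algebraMap F K) ∧
    extendSub F K ℓ =
      planeOf K ![1, -(3 * t), 3 * t ^ 2, -(t ^ 3)] ⊓
        planeOf K ![1, -(3 * t ^ q), 3 * (t ^ q) ^ 2, -((t ^ q) ^ 3)]

/-- A unisecant: a line meeting the twisted cubic in exactly one point. -/
def isUnisecant (F : Type) [Field F] (ℓ : Submodule F (Fin 4 → F)) : Prop :=
  isLine F ℓ ∧ ∃! P, P ∈ twistedCubic F ∧ P ≤ ℓ

/-- A `UΓ`-line: a non-tangent unisecant lying in some osculating plane. -/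
def isUGamma (F : Type) [Field F] (ℓ : Submodule F (Fin 4 → F)) : Prop :=
  isUnisecant F ℓ ∧ ¬ isTangent F ℓ ∧ ∃ π, isOscPlane F π ∧ ℓ ≤ π

/-- A `UnΓ`-line: a non-tangent unisecant lying in no osculating plane. -/
def isUnGamma (F : Type) [Field F] (ℓ : Submodule F (Fin 4 → F)) : Prop :=
  isUnisecant F ℓ ∧ ¬ isTangent F ℓ ∧ ∀ π, isOscPlane F π → ¬ ℓ ≤ π

/-- An `EΓ`-line: an external line, other than an imaginary chord, lying in some
osculating plane. -/
def isEGamma (F K : Type) [Field F] [Field K] [Algebra F K] (q : ℕ)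
    (ℓ : Submodule F (Fin 4 → F)) : Prop :=
  isExternal F ℓ ∧ ¬ isImagChord F K q ℓ ∧ ∃ π, isOscPlane F π ∧ ℓ ≤ π

/-- For `q ≡ 0 (mod 3)`: the axis of `Γ`, the line `x0 = x3 = 0`. -/
def axisLine (F : Type) [Field F] : Submodule F (Fin 4 → F) :=
  Submodule.span F {![0, 1, 0, 0], ![0, 0, 1, 0]}

/-- For `q ≡ 0 (mod 3)`: an `EA`-line, i.e. an external line, other than an imaginary
chord and other than the axis of `Γ`, meeting the axis of `Γ`. -/
def isEA (F K : Type) [Field F] [Field K] [Algebra F K] (q : ℕ)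
    (ℓ : Submodule F (Fin 4 → F)) : Prop :=
  isExternal F ℓ ∧ ¬ isImagChord F K q ℓ ∧ ℓ ≠ axisLine F ∧ ℓ ⊓ axisLine F ≠ ⊥

end

/-!
For `q ≥ 5` the group `G_q` is `PGL(2, q)` acting through the symmetric cube: after composing with
an element of `PGL(2, q)` a projectivity preserving the cubic fixes `P(∞)` and `P(0)`, and
substituting the images of the remaining points into the quadrics `v₀ v₂ = v₁²`, `v₁ v₃ = v₂²` gives
cubic polynomials with at least four roots, whose coefficients must vanish.

No three points of the cubic are collinear, so an imaginary chord is the same as a conjugate pair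
`{t, t^q}` with `t ∈ F_{q²} \ F_q`, on which `PGL(2, q)` acts by fractional linear maps. A matrix
sending `t` to a given `t' ∉ F_q` is determined by its denominator at `t`, which can be any nonzero
element of `F_{q²}`. This gives transitivity, and `2(q² - 1)` matrices stabilize `{t, t^q}`; modulo
the `q - 1` scalars there remain `2(q + 1)` projectivities.
-/

section SymmetricCube

variable {R S : Type*} [CommRing R] [CommRing S]

/-- The cubic Veronese vector `(x³, x²y, xy², y³)` of `w = (x, y)`, which represents the point
`P(t)` for `w = (t, 1)` and `P(∞)` for `w = (1, 0)`. -/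
def cubicVec (w : Fin 2 → R) : Fin 4 → R :=
  ![w 0 ^ 3, w 0 ^ 2 * w 1, w 0 * w 1 ^ 2, w 1 ^ 3]

lemma cubicVec_smul (k : R) (w : Fin 2 → R) : cubicVec (k • w) = k ^ 3 • cubicVec w := by
  ext i
  fin_cases i <;> simp [cubicVec] <;> ring

lemma cubicVec_comp (f : R →+* S) (w : Fin 2 → R) : cubicVec (f ∘ w) = f ∘ cubicVec w := by
  ext i
  fin_cases i <;> simp [cubicVec]

/-- The action of a `2 × 2` matrix on binary cubic forms: row `i` lists the coefficients of the
monomial `x ^ (3 - i) * y ^ i` in the entries of `cubicVec (![x, y] ᵥ* M)`. -/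
def symCube : Matrix (Fin 2) (Fin 2) R →* Matrix (Fin 4) (Fin 4) R where
  toFun M :=
    !![M 0 0 ^ 3, M 0 0 ^ 2 * M 0 1, M 0 0 * M 0 1 ^ 2, M 0 1 ^ 3;
       3 * M 0 0 ^ 2 * M 1 0, M 0 0 ^ 2 * M 1 1 + 2 * M 0 0 * M 1 0 * M 0 1,
         2 * M 0 0 * M 0 1 * M 1 1 + M 1 0 * M 0 1 ^ 2, 3 * M 0 1 ^ 2 * M 1 1;
       3 * M 0 0 * M 1 0 ^ 2, M 1 0 ^ 2 * M 0 1 + 2 * M 0 0 * M 1 0 * M 1 1,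
         M 0 0 * M 1 1 ^ 2 + 2 * M 1 0 * M 0 1 * M 1 1, 3 * M 0 1 * M 1 1 ^ 2;
       M 1 0 ^ 3, M 1 0 ^ 2 * M 1 1, M 1 0 * M 1 1 ^ 2, M 1 1 ^ 3]
  map_one' := by
    ext i j
    fin_cases i <;> fin_cases j <;> simp
  map_mul' M N := by
    ext i j
    fin_cases i <;> fin_cases j <;>
      simp [Matrix.mul_apply, Fin.sum_univ_two, Fin.sum_univ_four] <;> ring

lemma cubicVec_vecMul_symCube (w : Fin 2 → R) (M : Matrix (Fin 2) (Fin 2) R) :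
    cubicVec w ᵥ* symCube M = cubicVec (w ᵥ* M) := by
  ext i
  fin_cases i <;>
    simp [cubicVec, symCube, vecMul, dotProduct, Fin.sum_univ_two, Fin.sum_univ_four] <;> ring

lemma symCube_smul (k : R) (M : Matrix (Fin 2) (Fin 2) R) :
    symCube (k • M) = k ^ 3 • symCube M := by
  ext i j
  fin_cases i <;> fin_cases j <;> simp [symCube] <;> ring

lemma symCube_map (f : R →+* S) (M : Matrix (Fin 2) (Fin 2) R) :
    symCube (M.map f) = (symCube M).map f := by
  ext i j
  fin_cases i <;> fin_cases j <;> simp [symCube, map_ofNat f]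

lemma symCube_diagonal (a d : R) :
    symCube (diagonal ![a, d]) = diagonal ![a ^ 3, a ^ 2 * d, a * d ^ 2, d ^ 3] := by
  ext i j
  fin_cases i <;> fin_cases j <;> simp [symCube]

end SymmetricCube

section Veronese

variable {k : Type*} [Field k]

lemma exists_eq_smul_of_cross_eq {u w : Fin 2 → k} (hu : u ≠ 0) (h : u 0 * w 1 = u 1 * w 0) :
    ∃ c : k, w = c • u := by
  by_cases h0 : u 0 = 0
  · have h1 : u 1 ≠ 0 := fun h1 => hu (by ext i; fin_cases i <;> assumption)
    have hw : w 0 = 0 := by simpa [h0, h1] using h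
    refine ⟨w 1 / u 1, ?_⟩
    ext i
    fin_cases i <;> simp [h0, h1, hw]
  · refine ⟨w 0 / u 0, ?_⟩
    ext i
    fin_cases i <;> simp [h0]
    field_simp
    linear_combination h

lemma span_cubicVec_smul {c : k} (hc : c ≠ 0) (w : Fin 2 → k) :
    span k {cubicVec (c • w)} = span k {cubicVec w} := by
  rw [cubicVec_smul, span_singleton_smul_eq (pow_ne_zero 3 hc).isUnit]

lemma span_cubicVec_eq_iff {u w : Fin 2 → k} (hu : u ≠ 0) (hw : w ≠ 0) :
    span k {cubicVec u} = span k {cubicVec w} ↔ u 0 * w 1 = u 1 * w 0 := by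
  constructor
  · intro h
    obtain ⟨c, hc⟩ := mem_span_singleton.1 (h ▸ mem_span_singleton_self (cubicVec u))
    have cube_eq_zero : (u 0 * w 1 - u 1 * w 0) ^ 3 = 0 := by
      have h0 := congrFun hc 0
      have h1 := congrFun hc 1
      have h2 := congrFun hc 2
      have h3 := congrFun hc 3
      simp only [cubicVec, Pi.smul_apply, smul_eq_mul, cons_val] at h0 h1 h2 h3
      linear_combination -w 1 ^ 3 * h0 + 3 * w 1 ^ 2 * w 0 * h1 - 3 * w 1 * w 0 ^ 2 * h2 +
        w 0 ^ 3 * h3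
    exact sub_eq_zero.1 (pow_eq_zero_iff three_ne_zero |>.1 cube_eq_zero)
  · intro h
    obtain ⟨c, rfl⟩ := exists_eq_smul_of_cross_eq hu h
    exact (span_cubicVec_smul (left_ne_zero_of_smul hw) u).symm

-- The quadratic form `[u, ·] [u', ·]` times either coordinate is a linear form in `cubicVec`
-- that vanishes at `u` and `u'`.
lemma cross_eq_or_cross_eq_of_cubicVec_mem_span_pair {u u' w : Fin 2 → k} (hw : w ≠ 0)
    (h : cubicVec w ∈ span k {cubicVec u, cubicVec u'}) :
    u 0 * w 1 = u 1 * w 0 ∨ u' 0 * w 1 = u' 1 * w 0 := by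
  obtain ⟨a, b, hab⟩ := mem_span_pair.1 h
  have h0 := congrFun hab 0
  have h1 := congrFun hab 1
  have h2 := congrFun hab 2
  have h3 := congrFun hab 3
  simp only [cubicVec, Pi.add_apply, Pi.smul_apply, smul_eq_mul, cons_val] at h0 h1 h2 h3
  have mul_fst : w 0 * ((u 0 * w 1 - u 1 * w 0) * (u' 0 * w 1 - u' 1 * w 0)) = 0 := by
    linear_combination -(u 1 * u' 1) * h0 + (u 0 * u' 1 + u 1 * u' 0) * h1 - u 0 * u' 0 * h2
  have mul_snd : w 1 * ((u 0 * w 1 - u 1 * w 0) * (u' 0 * w 1 - u' 1 * w 0)) = 0 := by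
    linear_combination -(u 1 * u' 1) * h1 + (u 0 * u' 1 + u 1 * u' 0) * h2 - u 0 * u' 0 * h3
  have prod_eq_zero : (u 0 * w 1 - u 1 * w 0) * (u' 0 * w 1 - u' 1 * w 0) = 0 := by
    by_contra hne
    refine hw (funext fun i => ?_)
    fin_cases i
    · exact (mul_eq_zero.1 mul_fst).resolve_right hne
    · exact (mul_eq_zero.1 mul_snd).resolve_right hne
  exact (mul_eq_zero.1 prod_eq_zero).imp sub_eq_zero.1 sub_eq_zero.1

end Veronese

section Projectivities

variable {F : Type} [Field F]

lemma mem_twistedCubic_iff {P : Submodule F (Fin 4 → F)} :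
    P ∈ twistedCubic F ↔ ∃ w : Fin 2 → F, w ≠ 0 ∧ P = span F {cubicVec w} := by
  constructor
  · rintro ⟨v, ⟨t, rfl⟩ | rfl, rfl⟩
    · exact ⟨![t, 1], by simp, by simp [cubicVec]⟩
    · exact ⟨![1, 0], by simp, by simp [cubicVec]⟩
  · rintro ⟨w, hw, rfl⟩
    by_cases h1 : w 1 = 0
    · have h0 : w 0 ≠ 0 := fun h0 => hw (by ext i; fin_cases i <;> assumption)
      have hw : w = w 0 • ![1, 0] := by ext i; fin_cases i <;> simp [h1]
      refine ⟨_, Or.inr rfl, ?_⟩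
      rw [hw, span_cubicVec_smul h0]
      simp [cubicVec]
    · refine ⟨_, Or.inl ⟨w 0 / w 1, rfl⟩, ?_⟩
      have hw : w = w 1 • ![w 0 / w 1, 1] := by
        ext i
        fin_cases i
        · simp [mul_div_cancel₀ _ h1]
        · simp
      conv_rhs => rw [hw, span_cubicVec_smul h1]
      simp [cubicVec]

lemma quadrics_eq_of_span_mem_twistedCubic {v : Fin 4 → F} (h : span F {v} ∈ twistedCubic F) :
    v 0 * v 2 = v 1 ^ 2 ∧ v 1 * v 3 = v 2 ^ 2 := by
  obtain ⟨w, -, hw⟩ := mem_twistedCubic_iff.1 h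
  obtain ⟨c, rfl⟩ := mem_span_singleton.1 (hw ▸ mem_span_singleton_self v)
  constructor <;> simp [cubicVec] <;> ring

lemma projAct_span (A : GL (Fin 4) F) (s : Set (Fin 4 → F)) :
    projAct F A (span F s) = span F ((· ᵥ* A.val) '' s) :=
  map_span _ _

lemma projAct_span_singleton (A : GL (Fin 4) F) (v : Fin 4 → F) :
    projAct F A (span F {v}) = span F {v ᵥ* A.val} := by
  rw [projAct_span, Set.image_singleton]

lemma projAct_one : projAct F 1 = id := by
  ext W x
  simp [projAct]

lemma projAct_mul (A B : GL (Fin 4) F) : projAct F (A * B) = projAct F B ∘ projAct F A := by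
  ext W x
  simp [projAct]

lemma projAct_injective (A : GL (Fin 4) F) : Function.Injective (projAct F A) := by
  refine Function.LeftInverse.injective (g := projAct F A⁻¹) fun W => ?_
  rw [← Function.comp_apply (f := projAct F A⁻¹), ← projAct_mul, mul_inv_cancel, projAct_one, id]

lemma projAct_units_smul (c : Fˣ) (A : GL (Fin 4) F) : projAct F (c • A) = projAct F A := by
  ext W x
  simp only [projAct, mem_map, vecMulLinear_apply, Units.val_smul, vecMul_smul, ← smul_vecMul]
  exact ⟨fun ⟨v, hv, hx⟩ => ⟨c • v, W.smul_mem c.val hv, hx⟩,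
    fun ⟨v, hv, hx⟩ => ⟨c⁻¹ • v, W.smul_mem c⁻¹.val hv, by rwa [smul_inv_smul]⟩⟩

/-- The projectivity induced by `γ ∈ GL(2, F)` through its action on binary cubic forms; it maps
the point of `cubicVec w` to the point of `cubicVec (w ᵥ* γ)`. -/
def cubicProj (γ : GL (Fin 2) F) : Submodule F (Fin 4 → F) → Submodule F (Fin 4 → F) :=
  projAct F (Units.map symCube γ)

lemma cubicProj_mul (γ δ : GL (Fin 2) F) : cubicProj (γ * δ) = cubicProj δ ∘ cubicProj γ := by
  rw [cubicProj, map_mul, projAct_mul, cubicProj, cubicProj]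

lemma cubicProj_one : cubicProj (1 : GL (Fin 2) F) = id := by
  rw [cubicProj, map_one, projAct_one]

lemma cubicProj_span_cubicVec (γ : GL (Fin 2) F) (w : Fin 2 → F) :
    cubicProj γ (span F {cubicVec w}) = span F {cubicVec (w ᵥ* γ.val)} := by
  rw [cubicProj, projAct_span_singleton, Units.coe_map, cubicVec_vecMul_symCube]

lemma cubicProj_units_smul (c : Fˣ) (γ : GL (Fin 2) F) : cubicProj (c • γ) = cubicProj γ := by
  have : Units.map symCube (c • γ) = c ^ 3 • Units.map symCube γ :=
    Units.ext (symCube_smul c.val γ.val)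
  rw [cubicProj, this, projAct_units_smul, cubicProj]

lemma vecMul_GL_ne_zero {n k : Type*} [Fintype n] [DecidableEq n] [Field k] (γ : GL n k)
    {w : n → k} (hw : w ≠ 0) : w ᵥ* γ.val ≠ 0 := fun h =>
  hw (vecMul_injective_of_isUnit γ.isUnit (h.trans (zero_vecMul _).symm))

end Projectivities

section Classification

variable {F : Type} [Field F]

lemma cubic_coeffs_eq_zero (hF : 5 ≤ Cardinal.mk F) {a b c d : F}
    (h : ∀ t ≠ 0, a * t ^ 3 + b * t ^ 2 + c * t + d = 0) : a = 0 ∧ b = 0 ∧ c = 0 ∧ d = 0 := by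
  classical
  obtain ⟨s, hs⟩ := Cardinal.exists_finset_le_card F 5 (by exact_mod_cast hF)
  have hP : (Cubic.mk a b c d).toPoly = 0 := by
    refine Polynomial.eq_zero_of_natDegree_lt_card_of_eval_eq_zero' _ (s.erase 0)
      (fun t ht => ?_) ?_
    · simpa [Cubic.toPoly] using h t (Finset.ne_of_mem_erase ht)
    · have : s.card - 1 ≤ (s.erase 0).card := Finset.pred_card_le_card_erase
      have := Polynomial.natDegree_cubic_le (a := a) (b := b) (c := c) (d := d)
      simp only [Cubic.toPoly]
      omega
  exact Cubic.mk.inj ((Cubic.toPoly_eq_zero_iff _).1 hP)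

lemma quadrics_coeffs_eq_zero (hF : 5 ≤ Cardinal.mk F) {a b c d l m r r' s s' : F} (hl : l ≠ 0)
    (hm : m ≠ 0) (hcd : c = 0 → d ≠ 0)
    (h₁ : ∀ t ≠ 0, (l * t ^ 2 + r * t + s) * (c * t + d) = (a * t + b) ^ 2)
    (h₂ : ∀ t ≠ 0, (a * t + b) * (r' * t ^ 2 + s' * t + m) = t * (c * t + d) ^ 2) :
    b = 0 ∧ c = 0 ∧ r = 0 ∧ s = 0 ∧ r' = 0 ∧ s' = 0 ∧ l * d = a ^ 2 ∧ a * m = d ^ 2 := by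
  obtain ⟨h13, h12, h11, h10⟩ := cubic_coeffs_eq_zero hF (a := l * c) (b := l * d + r * c - a ^ 2)
    (c := r * d + s * c - 2 * a * b) (d := s * d - b ^ 2)
    fun t ht => by linear_combination h₁ t ht
  obtain ⟨h23, h22, h21, h20⟩ := cubic_coeffs_eq_zero hF (a := a * r' - c ^ 2)
    (b := a * s' + b * r' - 2 * c * d) (c := a * m + b * s' - d ^ 2) (d := b * m)
    fun t ht => by linear_combination h₂ t ht
  obtain rfl : c = 0 := by simpa [hl] using h13
  obtain rfl : b = 0 := by simpa [hm] using h20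
  have hd : d ≠ 0 := hcd rfl
  have ha : a ≠ 0 := by
    rintro rfl
    simp [hd] at h21
  refine ⟨rfl, rfl, ?_, ?_, ?_, ?_, by linear_combination h12, by linear_combination h21⟩
  · simpa [hd] using h11
  · simpa [hd] using h10
  · simpa [ha] using h23
  · simpa [ha] using h22

lemma eq_smul_symCube_diagonal (hF : 5 ≤ Cardinal.mk F) {B : Matrix (Fin 4) (Fin 4) F}
    (hdet : B.det ≠ 0) {l m : F} (h₀ : B 0 = ![l, 0, 0, 0]) (h₃ : B 3 = ![0, 0, 0, m])
    (hB : ∀ t : F, span F {cubicVec ![t, 1] ᵥ* B} ∈ twistedCubic F) :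
    ∃ a d : Fˣ, B = (a * d : F)⁻¹ • symCube (diagonal ![a.val, d.val]) := by
  have hl : l ≠ 0 := fun h => hdet <| det_eq_zero_of_row_eq_zero 0 <| by
    simp [Fin.forall_fin_succ, h₀, h]
  have hm : m ≠ 0 := fun h => hdet <| det_eq_zero_of_row_eq_zero 3 <| by
    simp [Fin.forall_fin_succ, h₃, h]
  have hcd : B 1 2 = 0 → B 2 2 ≠ 0 := fun hc hd => hdet <| det_eq_zero_of_column_eq_zero 2 <| by
    simp [Fin.forall_fin_succ, h₀, h₃, hc, hd]
  have hquad (t : F) := quadrics_eq_of_span_mem_twistedCubic (hB t)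
  simp only [cubicVec, vecMul, dotProduct, Fin.sum_univ_four, h₀, h₃, cons_val, one_pow, mul_one,
    one_mul, mul_zero, zero_add, add_zero] at hquad
  obtain ⟨hb, hc, hr, hs, hr', hs', hla, ham⟩ := quadrics_coeffs_eq_zero hF (a := B 1 1)
    (b := B 2 1) (r := B 1 0) (s := B 2 0) (r' := B 1 3) (s' := B 2 3) hl hm hcd
    (fun t ht => mul_left_cancel₀ (pow_ne_zero 2 ht) (by linear_combination (hquad t).1))
    (fun t ht => mul_left_cancel₀ ht (by linear_combination (hquad t).2))
  have hd := hcd hc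
  have ha : B 1 1 ≠ 0 := left_ne_zero_of_mul (ham ▸ pow_ne_zero 2 hd)
  have hB_eq : B = diagonal ![l, B 1 1, B 2 2, m] := by
    ext i j
    fin_cases i <;> fin_cases j <;> simp [h₀, h₃, hb, hc, hr, hs, hr', hs']
  refine ⟨.mk0 _ ha, .mk0 _ hd, ?_⟩
  rw [symCube_diagonal, ← diagonal_smul]
  refine hB_eq.trans (congrArg diagonal (funext fun i => ?_))
  fin_cases i <;> simp <;> field_simp
  · exact hla
  · rw [mul_comm, ham]

lemma projAct_mem_range_cubicProj_of_fixes (hF : 5 ≤ Cardinal.mk F) {B : GL (Fin 4) F}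
    (hmaps : Set.MapsTo (projAct F B) (twistedCubic F) (twistedCubic F))
    (hinf : projAct F B (span F {cubicVec ![1, 0]}) = span F {cubicVec ![1, 0]})
    (hzero : projAct F B (span F {cubicVec ![0, 1]}) = span F {cubicVec ![0, 1]}) :
    projAct F B ∈ Set.range (cubicProj (F := F)) := by
  have cubicVec_inf : cubicVec ![1, 0] = Pi.single (0 : Fin 4) (1 : F) := by
    ext i; fin_cases i <;> simp [cubicVec]
  have cubicVec_zero : cubicVec ![0, 1] = Pi.single (3 : Fin 4) (1 : F) := by
    ext i; fin_cases i <;> simp [cubicVec]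
  obtain ⟨l, hl⟩ : ∃ l : F, l • cubicVec ![1, 0] = B.val 0 := mem_span_singleton.1 <| by
    rw [← hinf, projAct_span_singleton, cubicVec_inf, single_one_vecMul]
    exact mem_span_singleton_self _
  obtain ⟨m, hm⟩ : ∃ m : F, m • cubicVec ![0, 1] = B.val 3 := mem_span_singleton.1 <| by
    rw [← hzero, projAct_span_singleton, cubicVec_zero, single_one_vecMul]
    exact mem_span_singleton_self _
  obtain ⟨a, d, hB⟩ := eq_smul_symCube_diagonal hF (B := B.val) B.det.ne_zero (l := l) (m := m)
    (by simp [← hl, cubicVec]) (by simp [← hm, cubicVec]) fun t => by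
      rw [← projAct_span_singleton]
      exact hmaps (mem_twistedCubic_iff.2 ⟨_, by simp, rfl⟩)
  let δ : GL (Fin 2) F := .mkOfDetNeZero (diagonal ![a.val, d.val]) (by simp)
  have hBδ : B = (a * d)⁻¹ • Units.map symCube δ :=
    Units.ext (by simpa [δ, Units.smul_def] using hB)
  exact ⟨δ, by rw [hBδ, projAct_units_smul, cubicProj]⟩

lemma cubicProj_image_twistedCubic (γ : GL (Fin 2) F) :
    cubicProj γ '' twistedCubic F = twistedCubic F := by
  have mapsTo (γ : GL (Fin 2) F) : Set.MapsTo (cubicProj γ) (twistedCubic F) (twistedCubic F) := by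
    intro P hP
    obtain ⟨w, hw, rfl⟩ := mem_twistedCubic_iff.1 hP
    rw [cubicProj_span_cubicVec]
    exact mem_twistedCubic_iff.2 ⟨_, vecMul_GL_ne_zero γ hw, rfl⟩
  refine (mapsTo γ).image_subset.antisymm fun P hP => ⟨cubicProj γ⁻¹ P, mapsTo γ⁻¹ hP, ?_⟩
  rw [← Function.comp_apply (f := cubicProj γ), ← cubicProj_mul, inv_mul_cancel, cubicProj_one, id]

lemma cubicProj_inv_apply {γ : GL (Fin 2) F} {P Q : Submodule F (Fin 4 → F)}
    (h : cubicProj γ P = Q) : cubicProj γ⁻¹ Q = P := by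
  rw [← h, ← Function.comp_apply (f := cubicProj γ⁻¹), ← cubicProj_mul, mul_inv_cancel,
    cubicProj_one, id]

lemma exists_cubicProj_span_cubicVec {u v : Fin 2 → F} (huv : u 0 * v 1 ≠ u 1 * v 0) :
    ∃ γ : GL (Fin 2) F, cubicProj γ (span F {cubicVec ![1, 0]}) = span F {cubicVec u} ∧
      cubicProj γ (span F {cubicVec ![0, 1]}) = span F {cubicVec v} := by
  have hdet : (Matrix.of ![u, v]).det ≠ 0 := by
    rw [det_fin_two]
    exact sub_ne_zero.2 huv
  refine ⟨.mkOfDetNeZero _ hdet, ?_, ?_⟩ <;> rw [cubicProj_span_cubicVec] <;> congr <;>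
    simp [Matrix.GeneralLinearGroup.mkOfDetNeZero]

-- Since `PGL(2, F)` is transitive on pairs of distinct points of the cubic, a projectivity
-- preserving the cubic may be composed with some `cubicProj γ⁻¹` so as to fix `P(∞)` and `P(0)`.
theorem Gq_eq_range_cubicProj (hF : 5 ≤ Cardinal.mk F) : Gq F = Set.range cubicProj := by
  refine Set.Subset.antisymm ?_ ?_
  swap
  · rintro _ ⟨γ, rfl⟩
    exact ⟨⟨_, rfl⟩, cubicProj_image_twistedCubic γ⟩
  rintro _ ⟨⟨A, rfl⟩, hA⟩
  have image_point {w : Fin 2 → F} (hw : w ≠ 0) :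
      ∃ u : Fin 2 → F, u ≠ 0 ∧ projAct F A (span F {cubicVec w}) = span F {cubicVec u} :=
    mem_twistedCubic_iff.1 (hA ▸ Set.mem_image_of_mem _ (mem_twistedCubic_iff.2 ⟨w, hw, rfl⟩))
  have hinf : (![1, 0] : Fin 2 → F) ≠ 0 := by simp
  have hzero : (![0, 1] : Fin 2 → F) ≠ 0 := by simp
  obtain ⟨u, hu, hAu⟩ := image_point hinf
  obtain ⟨v, hv, hAv⟩ := image_point hzero
  have huv : u 0 * v 1 ≠ u 1 * v 0 := by
    rw [Ne, ← span_cubicVec_eq_iff hu hv, ← hAu, ← hAv, (projAct_injective A).eq_iff,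
      span_cubicVec_eq_iff hinf hzero]
    simp
  obtain ⟨γ, hγu, hγv⟩ := exists_cubicProj_span_cubicVec huv
  have hB : projAct F (A * Units.map symCube γ⁻¹) = cubicProj γ⁻¹ ∘ projAct F A := projAct_mul _ _
  have hmaps : Set.MapsTo (cubicProj γ⁻¹ ∘ projAct F A) (twistedCubic F) (twistedCubic F) :=
    (Set.mapsTo_iff_image_subset.2 (cubicProj_image_twistedCubic γ⁻¹).subset).comp
      (Set.mapsTo_iff_image_subset.2 hA.subset)
  obtain ⟨δ, hδ⟩ := projAct_mem_range_cubicProj_of_fixes hF (B := A * Units.map symCube γ⁻¹)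
    (hB ▸ hmaps) (by rw [hB, Function.comp_apply, hAu, cubicProj_inv_apply hγu])
    (by rw [hB, Function.comp_apply, hAv, cubicProj_inv_apply hγv])
  refine ⟨δ * γ, ?_⟩
  rw [cubicProj_mul, hδ, hB, ← Function.comp_assoc, ← cubicProj_mul, inv_mul_cancel, cubicProj_one,
    Function.id_comp]

lemma exists_smul_one_eq_of_cubicProj_eq_id {γ : GL (Fin 2) F} (h : cubicProj γ = id) :
    ∃ c : Fˣ, c • 1 = γ := by
  have hcross {w : Fin 2 → F} (hw : w ≠ 0) : w 0 * (w ᵥ* γ.val) 1 = w 1 * (w ᵥ* γ.val) 0 := by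
    rw [← span_cubicVec_eq_iff hw (vecMul_GL_ne_zero γ hw), ← cubicProj_span_cubicVec, h, id]
  have h01 : γ 0 1 = 0 := by simpa [vecMul_eq_sum] using hcross (w := ![1, 0]) (by simp)
  have h10 : γ 1 0 = 0 := by simpa [vecMul_eq_sum] using (hcross (w := ![0, 1]) (by simp)).symm
  have h11 : γ 1 1 = γ 0 0 := by
    simpa [vecMul_eq_sum, h01, h10] using hcross (w := ![1, 1]) (by simp)
  have h00 : γ 0 0 ≠ 0 := fun h00 => γ.det.ne_zero <| by simp [det_fin_two, h00, h01]
  refine ⟨.mk0 _ h00, Units.ext <| Matrix.ext fun i j => ?_⟩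
  fin_cases i <;> fin_cases j <;> simp [Units.smul_def, h01, h10, h11]

lemma cubicProj_eq_iff {γ δ : GL (Fin 2) F} :
    cubicProj γ = cubicProj δ ↔ ∃ c : Fˣ, c • γ = δ := by
  refine ⟨fun h => ?_, fun ⟨c, hc⟩ => hc ▸ (cubicProj_units_smul c γ).symm⟩
  have hfix : cubicProj (δ * γ⁻¹) = id := by
    rw [cubicProj_mul, ← h, ← cubicProj_mul, mul_inv_cancel, cubicProj_one]
  obtain ⟨c, hc⟩ := exists_smul_one_eq_of_cubicProj_eq_id hfix
  refine ⟨c, ?_⟩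
  calc c • γ = c • 1 * γ := Units.ext (smul_one_mul c γ.val).symm
    _ = δ := by rw [hc, inv_mul_cancel_right]

end Classification

section ScalarExtension

variable {F K : Type} [Field F] [Field K] [Algebra F K]

lemma extendSub_span (s : Set (Fin 4 → F)) :
    extendSub F K (span F s) = span K ((algebraMap F K ∘ ·) '' s) := by
  let φ : (Fin 4 → F) →ₗ[F] Fin 4 → K := (Algebra.linearMap F K).compLeft (Fin 4)
  calc extendSub F K (span F s) = span K (Submodule.map φ (span F s)) := rfl
    _ = span K (φ '' s) := by rw [map_span, span_span_of_tower]

lemma extendSub_sup (V W : Submodule F (Fin 4 → F)) :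
    extendSub F K (V ⊔ W) = extendSub F K V ⊔ extendSub F K W := by
  rw [← span_eq V, ← span_eq W, ← span_union, extendSub_span, extendSub_span, extendSub_span,
    Set.image_union, span_union]

lemma finrank_extendSub (W : Submodule F (Fin 4 → F)) :
    Module.finrank K (extendSub F K W) = Module.finrank F W := by
  let b := Module.finBasis F W
  have hli : LinearIndependent F fun i => (b i : Fin 4 → F) :=
    b.linearIndependent.map' W.subtype W.ker_subtype
  have hspan : span F (Set.range fun i => (b i : Fin 4 → F)) = W := by
    have := congrArg (Submodule.map W.subtype) b.span_eq
    rwa [map_span, ← Set.range_comp, Submodule.map_top, range_subtype] at this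
  have hli' := linearIndependent_algebraMap_comp_iff (S := K) |>.2 hli
  conv_lhs => rw [← hspan, extendSub_span, ← Set.range_comp]
  exact (finrank_span_eq_card hli').trans (Fintype.card_fin _)

lemma extendSub_injective : Function.Injective (extendSub F K) := by
  have le_of_eq {V W : Submodule F (Fin 4 → F)} (h : extendSub F K V = extendSub F K W) :
      V ≤ W := by
    have hfin : Module.finrank F ↥(V ⊔ W) = Module.finrank F W := by
      rw [← finrank_extendSub (K := K), extendSub_sup, h, sup_idem, finrank_extendSub]
    exact le_sup_left.trans (eq_of_le_of_finrank_eq le_sup_right hfin.symm).ge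
  exact fun V W h => (le_of_eq h).antisymm (le_of_eq h.symm)

lemma extendSub_projAct (A : GL (Fin 4) F) (W : Submodule F (Fin 4 → F)) :
    extendSub F K (projAct F A W) = projAct K (A.map (algebraMap F K)) (extendSub F K W) := by
  rw [← span_eq W, projAct_span, extendSub_span, extendSub_span, projAct_span, Set.image_image,
    Set.image_image]
  congr 2
  ext v i
  exact RingHom.map_vecMul _ _ _ _

lemma extendSub_cubicProj (γ : GL (Fin 2) F) (W : Submodule F (Fin 4 → F)) :
    extendSub F K (cubicProj γ W) = cubicProj (γ.map (algebraMap F K)) (extendSub F K W) := by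
  rw [cubicProj, cubicProj, extendSub_projAct]
  exact congrArg (projAct K · _) (Units.ext (symCube_map _ _).symm)

end ScalarExtension

section QuadraticExtension

variable {F K : Type*} [Field F] [Field K] [Algebra F K]

lemma exists_notMem_range_algebraMap (hdim : Module.finrank F K ≠ 1) :
    ∃ t : K, t ∉ Set.range (algebraMap F K) := by
  by_contra! h
  exact hdim <| Subalgebra.bot_eq_top_iff_finrank_eq_one.1
    (Algebra.surjective_algebraMap_iff.1 h).symm

variable {t : K}

lemma eq_zero_of_mul_add_eq_zero (ht : t ∉ Set.range (algebraMap F K)) {a b : F}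
    (h : algebraMap F K a * t + algebraMap F K b = 0) : a = 0 ∧ b = 0 := by
  have ha : a = 0 := by
    by_contra ha
    refine ht ⟨-b / a, ?_⟩
    have : algebraMap F K a ≠ 0 := by simpa using ha
    rw [map_div₀, map_neg, div_eq_iff this]
    linear_combination -h
  exact ⟨ha, by simpa [ha] using h⟩

lemma mul_add_inj (ht : t ∉ Set.range (algebraMap F K)) {a b a' b' : F}
    (h : algebraMap F K a * t + algebraMap F K b = algebraMap F K a' * t + algebraMap F K b') :
    a = a' ∧ b = b' := by
  simpa only [sub_eq_zero] using eq_zero_of_mul_add_eq_zero ht (a := a - a') (b := b - b')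
    (by rw [map_sub, map_sub]; linear_combination h)

lemma exists_mul_add_eq (hdim : Module.finrank F K = 2) (ht : t ∉ Set.range (algebraMap F K))
    (z : K) : ∃ a b : F, algebraMap F K a * t + algebraMap F K b = z := by
  have hli : LinearIndependent F ![t, 1] := LinearIndependent.pair_iff.2 fun a b h =>
    eq_zero_of_mul_add_eq_zero ht (by simpa [Algebra.smul_def] using h)
  have hspan := hli.span_eq_top_of_card_eq_finrank (by simp [hdim])
  rw [range_cons_cons_empty] at hspan
  obtain ⟨a, b, hab⟩ := mem_span_pair.1 (hspan ▸ mem_top : z ∈ _)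
  exact ⟨a, b, by simpa [Algebra.smul_def] using hab⟩

lemma notMem_range_of_map_ne {σ : K →ₐ[F] K} (h : σ t ≠ t) : t ∉ Set.range (algebraMap F K) := by
  rintro ⟨a, rfl⟩
  exact h (σ.commutes a)

lemma map_notMem_range {σ : K →ₐ[F] K} (ht : t ∉ Set.range (algebraMap F K)) :
    σ t ∉ Set.range (algebraMap F K) := by
  rintro ⟨a, ha⟩
  exact ht ⟨a, σ.injective ((σ.commutes a).trans ha)⟩

end QuadraticExtension

section FiniteField

variable {F K : Type*} [Field F] [Fintype F] [Field K] [Algebra F K]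

lemma mem_range_algebraMap_of_pow_card_eq {t : K} (ht : t ^ Fintype.card F = t) :
    t ∈ Set.range (algebraMap F K) := by
  have hsplits := (FiniteField.isSplittingField_sub F F).splits
  rw [Algebra.algebraMap_self, Polynomial.map_id] at hsplits
  exact hsplits.mem_range_of_isRoot (FiniteField.X_pow_card_sub_X_ne_zero F Fintype.one_lt_card)
    (i := algebraMap F K) (by simp [ht])

end FiniteField

section ConjugateChords

variable {F K : Type} [Field F] [Field K] [Algebra F K] (σ : K →ₐ[F] K)

/-- The chord of the cubic over `K` joining `P(t)` to its conjugate `P(σ t)`. -/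
def conjChord (t : K) : Submodule K (Fin 4 → K) :=
  span K {cubicVec ![t, 1], cubicVec ![σ t, 1]}

variable {σ}

lemma conjChord_eq_conjChord_iff (hσ : Function.Involutive σ) {t t' : K} :
    conjChord σ t' = conjChord σ t ↔ t' = t ∨ t' = σ t := by
  constructor
  · intro h
    have hmem : cubicVec ![t', 1] ∈ conjChord σ t := h ▸ subset_span (Set.mem_insert _ _)
    simpa [eq_comm] using cross_eq_or_cross_eq_of_cubicVec_mem_span_pair (by simp) hmem
  · rintro (rfl | rfl)
    · rfl
    · rw [conjChord, hσ, Set.pair_comm, conjChord]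

lemma finrank_conjChord {t : K} (ht : σ t ≠ t) : Module.finrank K (conjChord σ t) = 2 := by
  have hli : LinearIndependent K ![cubicVec ![t, 1], cubicVec ![σ t, 1]] := by
    refine LinearIndependent.pair_iff.2 fun a b hab => ?_
    have h2 : a * t + b * σ t = 0 := by simpa [cubicVec] using congrFun hab 2
    have h3 : a + b = 0 := by simpa [cubicVec] using congrFun hab 3
    have hb : b = 0 := by
      refine (mul_eq_zero.1 (?_ : b * (σ t - t) = 0)).resolve_right (sub_ne_zero.2 ht)
      linear_combination h2 - t * h3
    exact ⟨by simpa [hb] using h3, hb⟩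
  rw [conjChord, ← range_cons_cons_empty _ _ ![]]
  exact (finrank_span_eq_card hli).trans (Fintype.card_fin 2)

lemma isExternal_of_extendSub_eq_conjChord {t : K} (ht : σ t ≠ t)
    {ℓ : Submodule F (Fin 4 → F)} (hℓ : extendSub F K ℓ = conjChord σ t) : isExternal F ℓ := by
  refine ⟨by rw [isLine, ← finrank_extendSub (K := K), hℓ, finrank_conjChord ht], ?_⟩
  intro P hP hPℓ
  obtain ⟨w, hw, rfl⟩ := mem_twistedCubic_iff.1 hP
  have hmem : cubicVec (algebraMap F K ∘ w) ∈ conjChord σ t := by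
    rw [← hℓ, cubicVec_comp]
    exact subset_span ⟨_, hPℓ (mem_span_singleton_self _), rfl⟩
  have hw' : algebraMap F K ∘ w ≠ 0 := fun h =>
    hw (funext fun i => by simpa using congrFun h i)
  have not_proportional {s : K} (hs : s ∉ Set.range (algebraMap F K)) :
      s * algebraMap F K (w 1) ≠ algebraMap F K (w 0) := by
    intro h
    obtain ⟨h1, h0⟩ := eq_zero_of_mul_add_eq_zero hs (a := w 1) (b := -w 0)
      (by rw [map_neg]; linear_combination h)
    exact hw (funext fun i => by fin_cases i <;> simp_all)
  rcases cross_eq_or_cross_eq_of_cubicVec_mem_span_pair hw' hmem with h | h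
  · exact not_proportional (notMem_range_of_map_ne ht) (by simpa using h)
  · exact not_proportional (map_notMem_range (notMem_range_of_map_ne ht)) (by simpa using h)

lemma exists_extendSub_eq_span_conj (hdim : Module.finrank F K = 2) {t : K} (ht : σ t ≠ t)
    (x : Fin 4 → K) : ∃ ℓ : Submodule F (Fin 4 → F), extendSub F K ℓ = span K {x, σ ∘ x} := by
  choose u w hx using fun i => exists_mul_add_eq hdim (notMem_range_of_map_ne ht) (x i)
  have hx : t • (algebraMap F K ∘ u) + algebraMap F K ∘ w = x := by
    ext i
    simp [← hx, mul_comm]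
  have hσx : σ t • (algebraMap F K ∘ u) + algebraMap F K ∘ w = σ ∘ x := by
    rw [← hx]
    ext i
    simp
  have hu : algebraMap F K ∘ u = (t - σ t)⁻¹ • (x - σ ∘ x) := by
    rw [← hσx, ← hx, add_sub_add_right_eq_sub, ← sub_smul, inv_smul_smul₀ (sub_ne_zero.2 ht.symm)]
  have hw : algebraMap F K ∘ w = x - t • (algebraMap F K ∘ u) := eq_sub_of_add_eq' hx
  have hmem_u : algebraMap F K ∘ u ∈ span K {x, σ ∘ x} :=
    hu ▸ smul_mem _ _ (sub_mem (mem_span_of_mem (by simp)) (mem_span_of_mem (by simp)))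
  have hmem_w : algebraMap F K ∘ w ∈ span K {x, σ ∘ x} :=
    hw ▸ sub_mem (mem_span_of_mem (by simp)) (smul_mem _ _ hmem_u)
  refine ⟨span F {u, w}, ?_⟩
  rw [extendSub_span, Set.image_pair]
  exact le_antisymm (span_le.2 (Set.pair_subset hmem_u hmem_w))
    (span_le.2 (Set.pair_subset (mem_span_pair.2 ⟨t, 1, by rw [one_smul, hx]⟩)
      (mem_span_pair.2 ⟨σ t, 1, by rw [one_smul, hσx]⟩)))

lemma exists_extendSub_eq_conjChord (hdim : Module.finrank F K = 2) {t : K} (ht : σ t ≠ t) :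
    ∃ ℓ : Submodule F (Fin 4 → F), extendSub F K ℓ = conjChord σ t := by
  have hconj : cubicVec ![σ t, 1] = σ ∘ cubicVec ![t, 1] := by
    rw [← AlgHom.coe_toRingHom, ← cubicVec_comp]
    congr
    ext i
    fin_cases i <;> simp
  rw [conjChord, hconj]
  exact exists_extendSub_eq_span_conj hdim ht _

end ConjugateChords

section Mobius

variable {F K : Type} [Field F] [Field K] [Algebra F K]

/-- The denominator `b t + d` of the fractional linear map induced by the matrix with rows
`(a, b)` and `(c, d)`. -/
def mobiusDenom (γ : GL (Fin 2) F) (t : K) : K :=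
  algebraMap F K (γ 0 1) * t + algebraMap F K (γ 1 1)

/-- The action `t ↦ (a t + c) / (b t + d)` on `K` of the matrix with rows `(a, b)` and `(c, d)`,
which describes `(t, 1) ↦ (t, 1) ᵥ* γ` on the projective line. The denominator never vanishes
for `t ∉ F`. -/
def mobius (γ : GL (Fin 2) F) (t : K) : K :=
  (algebraMap F K (γ 0 0) * t + algebraMap F K (γ 1 0)) / mobiusDenom γ t

variable {t t' : K}

lemma mobiusDenom_ne_zero (ht : t ∉ Set.range (algebraMap F K)) (γ : GL (Fin 2) F) :
    mobiusDenom γ t ≠ 0 := by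
  intro h
  obtain ⟨h01, h11⟩ := eq_zero_of_mul_add_eq_zero ht h
  exact γ.det.ne_zero (by simp [det_fin_two, h01, h11])

lemma mobius_eq_iff (ht : t ∉ Set.range (algebraMap F K)) {γ : GL (Fin 2) F} :
    mobius γ t = t' ↔
      algebraMap F K (γ 0 0) * t + algebraMap F K (γ 1 0) = t' * mobiusDenom γ t :=
  div_eq_iff (mobiusDenom_ne_zero ht γ)

lemma map_mobius (σ : K →ₐ[F] K) (γ : GL (Fin 2) F) (t : K) :
    σ (mobius γ t) = mobius γ (σ t) := by
  simp [mobius, mobiusDenom]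

lemma mobius_notMem_range (ht : t ∉ Set.range (algebraMap F K)) (γ : GL (Fin 2) F) :
    mobius γ t ∉ Set.range (algebraMap F K) := by
  rintro ⟨a, ha⟩
  obtain ⟨h00, h10⟩ := mul_add_inj ht (a := γ 0 0) (b := γ 1 0) (a' := a * γ 0 1)
    (b' := a * γ 1 1) (by
      rw [(mobius_eq_iff ht).1 ha.symm, mobiusDenom, map_mul, map_mul]
      ring)
  exact γ.det.ne_zero (by rw [GeneralLinearGroup.val_det_apply, det_fin_two, h00, h10]; ring)

lemma vecMul_map_eq_smul_mobius (ht : t ∉ Set.range (algebraMap F K)) (γ : GL (Fin 2) F) :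
    ![t, 1] ᵥ* (γ.map (algebraMap F K)).val = mobiusDenom γ t • ![mobius γ t, 1] := by
  ext i
  fin_cases i
  · simp [vecMul_eq_sum, mobius, mul_div_cancel₀ _ (mobiusDenom_ne_zero ht γ), mul_comm]
  · simp [vecMul_eq_sum, mobiusDenom, mul_comm]

lemma cubicProj_map_conjChord {σ : K →ₐ[F] K} (ht : t ∉ Set.range (algebraMap F K))
    (γ : GL (Fin 2) F) :
    cubicProj (γ.map (algebraMap F K)) (conjChord σ t) = conjChord σ (mobius γ t) := by
  have hpoint {s : K} (hs : s ∉ Set.range (algebraMap F K)) :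
      cubicProj (γ.map (algebraMap F K)) (span K {cubicVec ![s, 1]}) =
        span K {cubicVec ![mobius γ s, 1]} := by
    rw [cubicProj_span_cubicVec, vecMul_map_eq_smul_mobius hs,
      span_cubicVec_smul (mobiusDenom_ne_zero hs γ)]
  simp only [conjChord, span_insert, map_mobius, ← hpoint ht, ← hpoint (map_notMem_range ht)]
  exact Submodule.map_sup _ _ _

lemma injOn_mobiusDenom (ht : t ∉ Set.range (algebraMap F K)) :
    Set.InjOn (mobiusDenom · t) {γ : GL (Fin 2) F | mobius γ t = t'} := by
  intro γ hγ δ hδ h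
  have hnum : algebraMap F K (γ 0 0) * t + algebraMap F K (γ 1 0) =
      algebraMap F K (δ 0 0) * t + algebraMap F K (δ 1 0) := by
    rw [(mobius_eq_iff ht).1 hγ, (mobius_eq_iff ht).1 hδ, show mobiusDenom γ t = _ from h]
  obtain ⟨h00, h10⟩ := mul_add_inj ht hnum
  obtain ⟨h01, h11⟩ := mul_add_inj ht h
  refine Units.ext (Matrix.ext fun i j => ?_)
  fin_cases i <;> fin_cases j <;> assumption

lemma exists_mobius_eq (hdim : Module.finrank F K = 2) (ht : t ∉ Set.range (algebraMap F K))
    (ht' : t' ∉ Set.range (algebraMap F K)) {y : K} (hy : y ≠ 0) :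
    ∃ γ : GL (Fin 2) F, mobius γ t = t' ∧ mobiusDenom γ t = y := by
  obtain ⟨b, d, hbd⟩ := exists_mul_add_eq hdim ht y
  obtain ⟨a, c, hac⟩ := exists_mul_add_eq hdim ht (t' * y)
  have hdet : !![a, b; c, d].det ≠ 0 := by
    rw [Ne, ← exists_mulVec_eq_zero_iff]
    rintro ⟨v, hv, hv0⟩
    have h0 := congrArg (algebraMap F K) (congrFun hv0 0)
    have h1 := congrArg (algebraMap F K) (congrFun hv0 1)
    simp only [mulVec, dotProduct, Fin.sum_univ_two, of_apply, cons_val, Pi.zero_apply, map_add,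
      map_mul, map_zero] at h0 h1
    have hv_t' : y * (algebraMap F K (v 0) * t' + algebraMap F K (v 1)) = 0 := by
      linear_combination t * h0 + h1 - algebraMap F K (v 0) * hac - algebraMap F K (v 1) * hbd
    obtain ⟨hv0, hv1⟩ := eq_zero_of_mul_add_eq_zero ht' ((mul_eq_zero.1 hv_t').resolve_left hy)
    exact hv (funext fun i => by fin_cases i <;> assumption)
  refine ⟨.mkOfDetNeZero _ hdet, (mobius_eq_iff ht).2 ?_, hbd⟩
  exact hac.trans (congrArg (t' * ·) hbd.symm)

lemma ncard_setOf_mobius_eq [Finite K] (hdim : Module.finrank F K = 2)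
    (ht : t ∉ Set.range (algebraMap F K)) (ht' : t' ∉ Set.range (algebraMap F K)) :
    {γ : GL (Fin 2) F | mobius γ t = t'}.ncard = Nat.card K - 1 := by
  have himage : (mobiusDenom · t) '' {γ : GL (Fin 2) F | mobius γ t = t'} = {0}ᶜ :=
    Set.Subset.antisymm (Set.image_subset_iff.2 fun γ _ => mobiusDenom_ne_zero ht γ)
      fun _ hy => exists_mobius_eq hdim ht ht' hy
  rw [← (injOn_mobiusDenom ht).ncard_image, himage, Set.ncard_compl, Set.ncard_singleton]

end Mobius

section Stabilizer

variable {F K : Type} [Field F] [Field K] [Algebra F K] {σ : K →ₐ[F] K} {t t' : K}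
  {ℓ ℓ' : Submodule F (Fin 4 → F)}

lemma cubicProj_eq_iff_mobius_eq (hσ : Function.Involutive σ)
    (ht : t ∉ Set.range (algebraMap F K)) (hℓ : extendSub F K ℓ = conjChord σ t)
    (hℓ' : extendSub F K ℓ' = conjChord σ t') {γ : GL (Fin 2) F} :
    cubicProj γ ℓ = ℓ' ↔ mobius γ t = t' ∨ mobius γ t = σ t' := by
  rw [← (extendSub_injective (K := K)).eq_iff, extendSub_cubicProj, hℓ, hℓ',
    cubicProj_map_conjChord ht, conjChord_eq_conjChord_iff hσ]

lemma ncard_setOf_cubicProj_eq_self [Finite K] (hdim : Module.finrank F K = 2)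
    (hσ : Function.Involutive σ) (ht : σ t ≠ t) (hℓ : extendSub F K ℓ = conjChord σ t) :
    {γ : GL (Fin 2) F | cubicProj γ ℓ = ℓ}.ncard = 2 * (Nat.card K - 1) := by
  have htF : t ∉ Set.range (algebraMap F K) := notMem_range_of_map_ne ht
  have : Finite F := .of_injective _ (algebraMap F K).injective
  have hunion : {γ : GL (Fin 2) F | cubicProj γ ℓ = ℓ} =
      {γ | mobius γ t = t} ∪ {γ | mobius γ t = σ t} :=
    Set.ext fun γ => cubicProj_eq_iff_mobius_eq hσ htF hℓ hℓ
  have hdisj : Disjoint {γ : GL (Fin 2) F | mobius γ t = t} {γ | mobius γ t = σ t} :=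
    Set.disjoint_left.2 fun γ h h' => ht (h'.symm.trans h)
  rw [hunion, Set.ncard_union_eq hdisj, ncard_setOf_mobius_eq hdim htF htF,
    ncard_setOf_mobius_eq hdim htF (map_notMem_range htF), two_mul]

lemma ncard_image_mul_of_ncard_fiber_eq {α β : Type*} {f : α → β} {S : Set α} (hS : S.Finite)
    {n : ℕ} (h : ∀ a ∈ S, {b ∈ S | f b = f a}.ncard = n) : (f '' S).ncard * n = S.ncard := by
  classical
  lift S to Finset α using hS
  rw [Set.ncard_coe_finset, Finset.card_eq_sum_card_image f S, ← Finset.coe_image,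
    Set.ncard_coe_finset, ← smul_eq_mul]
  refine (Finset.sum_eq_card_nsmul fun b hb => ?_).symm
  obtain ⟨a, ha, rfl⟩ := Finset.mem_image.1 hb
  rw [← h a ha, ← Set.ncard_coe_finset, Finset.coe_filter]
  rfl

lemma ncard_setOf_cubicProj_eq (γ : GL (Fin 2) F) :
    {δ : GL (Fin 2) F | cubicProj δ = cubicProj γ}.ncard = Nat.card Fˣ := by
  have hrange : {δ : GL (Fin 2) F | cubicProj δ = cubicProj γ} = Set.range (· • γ : Fˣ → _) :=
    Set.ext fun δ => eq_comm.trans cubicProj_eq_iff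
  have hinj : Function.Injective (· • γ : Fˣ → GL (Fin 2) F) := fun _ _ h =>
    Units.ext (smul_left_injective F γ.ne_zero (congrArg Units.val h))
  rw [hrange, ← Set.image_univ, Set.ncard_image_of_injective _ hinj, Set.ncard_univ]

lemma ncard_lineStab_mul [Finite F] (hF : 5 ≤ Cardinal.mk F) :
    (lineStab F ℓ).ncard * Nat.card Fˣ = {γ : GL (Fin 2) F | cubicProj γ ℓ = ℓ}.ncard := by
  have himage : lineStab F ℓ = cubicProj '' {γ : GL (Fin 2) F | cubicProj γ ℓ = ℓ} := by
    ext f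
    simp only [lineStab, Gq_eq_range_cubicProj hF]
    constructor
    · rintro ⟨⟨γ, rfl⟩, hγ⟩
      exact ⟨γ, hγ, rfl⟩
    · rintro ⟨γ, hγ, rfl⟩
      exact ⟨⟨γ, rfl⟩, hγ⟩
  rw [himage]
  refine ncard_image_mul_of_ncard_fiber_eq (Set.toFinite _) fun γ hγ => ?_
  have hfiber : {δ | cubicProj δ ℓ = ℓ ∧ cubicProj δ = cubicProj γ} =
      {δ | cubicProj δ = cubicProj γ} :=
    Set.ext fun δ => and_iff_right_of_imp fun h => h ▸ hγ
  exact hfiber ▸ ncard_setOf_cubicProj_eq γ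

theorem mem_lineOrbit_iff_exists_conjChord (hF : 5 ≤ Cardinal.mk F)
    (hdim : Module.finrank F K = 2) (ht : t ∉ Set.range (algebraMap F K))
    (hℓ : extendSub F K ℓ = conjChord σ t) :
    ℓ' ∈ lineOrbit F ℓ ↔
      ∃ t' ∉ Set.range (algebraMap F K), extendSub F K ℓ' = conjChord σ t' := by
  simp only [lineOrbit, Gq_eq_range_cubicProj hF, Set.exists_range_iff, Set.mem_ofPred_eq]
  constructor
  · rintro ⟨γ, rfl⟩
    refine ⟨mobius γ t, mobius_notMem_range ht γ, ?_⟩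
    rw [extendSub_cubicProj, hℓ, cubicProj_map_conjChord ht]
  · rintro ⟨t', ht', hℓ'⟩
    obtain ⟨γ, hγ, -⟩ := exists_mobius_eq hdim ht ht' one_ne_zero
    refine ⟨γ, extendSub_injective (K := K) ?_⟩
    rw [extendSub_cubicProj, hℓ, cubicProj_map_conjChord ht, hγ, hℓ']

end Stabilizer

section ImaginaryChords

variable {F K : Type} [Field F] [Fintype F] [Field K] [Algebra F K]

open FiniteField

lemma frobeniusAlgHom_ne_self {t : K} (ht : t ∉ Set.range (algebraMap F K)) :
    frobeniusAlgHom F K t ≠ t :=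
  fun h => ht (mem_range_algebraMap_of_pow_card_eq h)

lemma isImagChord_iff_exists_conjChord {ℓ : Submodule F (Fin 4 → F)} :
    isImagChord F K (Fintype.card F) ℓ ↔
      ∃ t ∉ Set.range (algebraMap F K), extendSub F K ℓ = conjChord (frobeniusAlgHom F K) t := by
  have hchord (t : K) : conjChord (frobeniusAlgHom F K) t =
      span K {![t ^ 3, t ^ 2, t, 1], ![(t ^ Fintype.card F) ^ 3, (t ^ Fintype.card F) ^ 2,
        t ^ Fintype.card F, 1]} := by
    simp [conjChord, cubicVec]
  simp only [isImagChord, hchord]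
  refine and_iff_right_of_imp fun ⟨t, ht, hℓ⟩ => ?_
  exact isExternal_of_extendSub_eq_conjChord (frobeniusAlgHom_ne_self ht) (hℓ.trans (hchord t).symm)

variable [Fintype K]

lemma finrank_eq_two_of_card_eq_sq (hcard : Fintype.card K = Fintype.card F ^ 2) :
    Module.finrank F K = 2 :=
  Nat.pow_right_injective (Fintype.one_lt_card (α := F))
    (Module.card_eq_pow_finrank.symm.trans hcard)

lemma involutive_frobeniusAlgHom (hcard : Fintype.card K = Fintype.card F ^ 2) :
    Function.Involutive (frobeniusAlgHom F K) := fun t => by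
  simp [← pow_mul, ← sq, ← hcard, pow_card]

end ImaginaryChords

theorem stmt_6 (q : ℕ) (F : Type) [Field F] [Fintype F]
    (hcard : Fintype.card F = q) (K : Type) [Field K] [Fintype K] [Algebra F K] (hcardK : Fintype.card K = q ^ 2) (hq : 5 ≤ q) :
    (∃ ℓ₀ : Submodule F (Fin 4 → F), {ℓ : Submodule F (Fin 4 → F) | isImagChord F K q ℓ} = lineOrbit F ℓ₀) ∧
    ∀ ℓ : Submodule F (Fin 4 → F), isImagChord F K q ℓ → (lineStab F ℓ).ncard = 2 * (q + 1) := by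
  subst hcard
  have hF : 5 ≤ Cardinal.mk F := by rw [Cardinal.mk_fintype]; exact_mod_cast hq
  have hdim : Module.finrank F K = 2 := finrank_eq_two_of_card_eq_sq hcardK
  constructor
  · obtain ⟨t, ht⟩ := exists_notMem_range_algebraMap (F := F) (K := K) (by omega)
    obtain ⟨ℓ₀, hℓ₀⟩ := exists_extendSub_eq_conjChord hdim (frobeniusAlgHom_ne_self ht)
    exact ⟨ℓ₀, Set.ext fun ℓ => isImagChord_iff_exists_conjChord.trans
      (mem_lineOrbit_iff_exists_conjChord hF hdim ht hℓ₀).symm⟩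
  · intro ℓ hℓ
    obtain ⟨t, ht, hℓ⟩ := isImagChord_iff_exists_conjChord.1 hℓ
    have hstab := (ncard_lineStab_mul hF).trans (ncard_setOf_cubicProj_eq_self hdim
      (involutive_frobeniusAlgHom hcardK) (frobeniusAlgHom_ne_self ht) hℓ)
    rw [Nat.card_units, Nat.card_eq_fintype_card, Nat.card_eq_fintype_card, hcardK,
      ← one_pow (M := ℕ) 2, Nat.sq_sub_sq, ← mul_assoc] at hstab
    exact Nat.eq_of_mul_eq_mul_right (by omega) hstab
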